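/- Let a ∈ ℝ, let I_f be an interval with least element a, nonempty interior, and I_f ⊂ [a,∞), let Ω ⊂ ℝ^m be a nonempty open set, let α = (α₁,…,α_m) ∈ (0,1]^m, let q_a ∈ Ω, and let f : Ω × I_f → ℝ^m be a Carathéodory function that is bounded on compacts: for every compact K ⊂ Ω and every compact subinterval [c,d] ⊂ I_f there exists M ≥ 0 with |f(x,t)| ≤ M for all x ∈ K and almost every t ∈ [c,d]. Then a couple (q,I) is a local solution of the Caputo Cauchy problem ( _cD^{α_i}_{a+}[q_i] = f_i(q(·),·) a.e. on I, q(a) = q_a ) if and only if I ⊂ I_f is an interval with least element a and nonempty interior, q : I → Ω is continuous, and for every t ∈ I and every i ∈ {1,…,m}, q_i(t) = (q_a)_i + (1/Γ(α_i)) ∫_a^t (t−τ)^{α_i−1} f_i(q(τ),τ) dτ. -/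

import Mathlib

open MeasureTheory Set

/-- Left Riemann–Liouville fractional integral of order `α` with base point `a`
(for `α = 0` it is the identity). -/
noncomputable def rlInt (a α : ℝ) (q : ℝ → ℝ) (t : ℝ) : ℝ :=
  if α = 0 then q t else (1 / Real.Gamma α) * ∫ τ in a..t, (t - τ) ^ (α - 1) * q τ

/-- `I` is an interval with least element `a`, nonempty interior, and `I ⊆ [a,∞)`. -/
def IsIntervalFrom (a : ℝ) (I : Set ℝ) : Prop :=
  a ∈ I ∧ I ⊆ Set.Ici a ∧ (interior I).Nonempty ∧ I.OrdConnected

/-- `(q, I)` is a local solution of the Caputo Cauchy problem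
`_cD^{α_i}_{a+}[q_i] = F_i(q(·),·)` a.e., `q(a) = qa`, on the domain `Ω`:
`I ⊆ If` is an interval with least element `a` and nonempty interior, `q` is continuous
on `I` with values in `Ω` and `q(a) = qa`, and for each `i` the function
`I^{1-α_i}_{a+}[q_i - (qa)_i]` agrees a.e. on `I` with a locally absolutely continuous
function `t ↦ c + ∫_a^t h` whose derivative `h` (the Caputo fractional derivative of
`q_i`) equals `F_i(q(t), t)` for almost every `t ∈ I`. -/
def IsCaputoLocalSol (a : ℝ) (If : Set ℝ) {m : ℕ}
    (Ω : Set (EuclideanSpace ℝ (Fin m))) (α : Fin m → ℝ)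
    (qa : EuclideanSpace ℝ (Fin m))
    (F : EuclideanSpace ℝ (Fin m) → ℝ → EuclideanSpace ℝ (Fin m))
    (q : ℝ → EuclideanSpace ℝ (Fin m)) (I : Set ℝ) : Prop :=
  IsIntervalFrom a I ∧ I ⊆ If ∧ ContinuousOn q I ∧ (∀ t ∈ I, q t ∈ Ω) ∧ q a = qa ∧
  ∀ i, ∃ c : ℝ, ∃ h : ℝ → ℝ,
    (∀ b ∈ I, MeasureTheory.IntegrableOn h (Set.Icc a b)) ∧
    (∀ᵐ t ∂(MeasureTheory.volume.restrict I),
      rlInt a (1 - α i) (fun τ => q τ i - qa i) t = c + ∫ τ in a..t, h τ) ∧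
    (∀ᵐ t ∂(MeasureTheory.volume.restrict I), h t = F (q t) t i)

/-- `(q, I)` is a maximal local solution of the Caputo Cauchy problem:
every extension `(q', I')` of it satisfies `I' = I`. -/
def IsMaximalSol (a : ℝ) (If : Set ℝ) {m : ℕ}
    (Ω : Set (EuclideanSpace ℝ (Fin m))) (α : Fin m → ℝ)
    (qa : EuclideanSpace ℝ (Fin m))
    (F : EuclideanSpace ℝ (Fin m) → ℝ → EuclideanSpace ℝ (Fin m))
    (q : ℝ → EuclideanSpace ℝ (Fin m)) (I : Set ℝ) : Prop :=
  IsCaputoLocalSol a If Ω α qa F q I ∧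
  ∀ (q' : ℝ → EuclideanSpace ℝ (Fin m)) (I' : Set ℝ),
    IsCaputoLocalSol a If Ω α qa F q' I' → I ⊆ I' → Set.EqOn q' q I → I' = I

/-!
By the Beta integral and Dirichlet's formula for exchanging the order of integration over a
triangle, fractional integrals form a semigroup: `I^β I^α = I^{α+β}`. Hence `I^{1-α} I^α g` is the
ordinary primitive of `g`, so that `g` is the Riemann–Liouville derivative of `I^α g`, and `I^α` is
injective on continuous functions: apply `I^{1-α}` and differentiate.

Along a continuous curve `q` the function `g = F(q(·), ·)` is essentially bounded on compact
intervals, so `I^α g` is Hölder continuous of exponent `α`. If `q` solves the Caputo problem, then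
`I^{1-α}[q - q(a)]` and the primitive of `g` are continuous and differ by a constant, which is zero
because both vanish at `a`. Thus `q - q(a)` and `I^α g` are continuous functions with the same
image under `I^{1-α}`, and injectivity gives the integral equation.
-/

section RpowIntegrals

lemma integral_sub_rpow_mul_sub_rpow {α β τ t : ℝ} (hα : 0 < α) (hβ : 0 < β) (hτt : τ < t) :
    ∫ s in τ..t, (t - s) ^ (β - 1) * (s - τ) ^ (α - 1) =
      (t - τ) ^ (α + β - 1) * ProbabilityTheory.beta α β := by
  have translate : ∫ s in τ..t, (t - s) ^ (β - 1) * (s - τ) ^ (α - 1) =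
      ∫ x in 0..t - τ, x ^ (α - 1) * (t - τ - x) ^ (β - 1) := by
    rw [← sub_self τ, ← intervalIntegral.integral_comp_sub_right
      (fun x => x ^ (α - 1) * (t - τ - x) ^ (β - 1))]
    simp only [sub_sub_sub_cancel_right, mul_comm]
  have complexify :
      ∫ x in 0..t - τ, (x : ℂ) ^ ((α : ℂ) - 1) * ((t - τ : ℝ) - x : ℂ) ^ ((β : ℂ) - 1) =
        ∫ x in 0..t - τ, ((x ^ (α - 1) * (t - τ - x) ^ (β - 1) : ℝ) : ℂ) := by
    refine intervalIntegral.integral_congr fun x hx => ?_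
    rw [uIcc_of_le (sub_pos.2 hτt).le] at hx
    simp [Complex.ofReal_cpow hx.1, Complex.ofReal_cpow (sub_nonneg.2 hx.2)]
  have beta_eq : Complex.betaIntegral α β = (ProbabilityTheory.beta α β : ℝ) := by
    rw [Complex.betaIntegral_eq_Gamma_mul_div _ _ (by simpa) (by simpa), ProbabilityTheory.beta]
    simp [← Complex.ofReal_add, Complex.Gamma_ofReal]
  have scaled := Complex.betaIntegral_scaled α β (sub_pos.2 hτt)
  rw [complexify, intervalIntegral.integral_ofReal, beta_eq] at scaled
  rw [translate]
  apply Complex.ofReal_injective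
  rw [scaled, Complex.ofReal_mul, Complex.ofReal_cpow (sub_pos.2 hτt).le]
  push_cast
  rfl

lemma integrableOn_sub_rpow_mul_sub_rpow {α β τ t : ℝ} (hα : 0 < α) (hβ : 0 < β) (hτt : τ < t) :
    IntegrableOn (fun s => (t - s) ^ (β - 1) * (s - τ) ^ (α - 1)) (Icc τ t) := by
  rw [← intervalIntegrable_iff_integrableOn_Icc_of_le hτt.le]
  apply intervalIntegral.intervalIntegrable_of_integral_ne_zero
  rw [integral_sub_rpow_mul_sub_rpow hα hβ hτt]
  exact (mul_pos (Real.rpow_pos_of_pos (sub_pos.2 hτt) _)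
    (ProbabilityTheory.beta_pos hα hβ)).ne'

lemma intervalIntegrable_sub_rpow {α : ℝ} (hα : 0 < α) (s x y : ℝ) :
    IntervalIntegrable (fun τ => (s - τ) ^ (α - 1)) volume x y := by
  simpa using (intervalIntegral.intervalIntegrable_rpow' (a := s - x) (b := s - y) (r := α - 1)
    (by linarith)).comp_sub_left s

lemma integral_sub_rpow {α : ℝ} (hα : 0 < α) (s x y : ℝ) :
    ∫ τ in x..y, (s - τ) ^ (α - 1) = ((s - x) ^ α - (s - y) ^ α) / α := by
  rw [intervalIntegral.integral_comp_sub_left (fun r => r ^ (α - 1)) s,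
    integral_rpow (Or.inl (by linarith)), sub_add_cancel]

end RpowIntegrals

section IntervalIntegrals

variable {E : Type*} [NormedAddCommGroup E] [NormedSpace ℝ E]

lemma Ici_inter_Ioc_of_lt {X : Type*} [Preorder X] {a b c : X} (hab : a < b) :
    Ici b ∩ Ioc a c = Icc b c := by
  ext x
  exact ⟨fun h => ⟨h.1, h.2.2⟩, fun h => ⟨h.1, hab.trans_le h.1, h.2⟩⟩

lemma intervalIntegral_integral_triangle_swap {a t : ℝ} (hat : a ≤ t) {f : ℝ → ℝ → E}
    (hf : IntegrableOn (Function.uncurry f) {p | p.2 ≤ p.1}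
      ((volume.restrict (Ioc a t)).prod (volume.restrict (Ioc a t)))) :
    ∫ s in a..t, ∫ τ in a..s, f s τ = ∫ τ in a..t, ∫ s in τ..t, f s τ := by
  set μ := volume.restrict (Ioc a t)
  have hT : MeasurableSet {p : ℝ × ℝ | p.2 ≤ p.1} := measurableSet_le measurable_snd measurable_fst
  have lower_section : ∀ᵐ s ∂μ, ∫ τ in a..s, f s τ = ∫ τ, (Iic s).indicator (f s) τ ∂μ := by
    filter_upwards [ae_restrict_mem measurableSet_Ioc] with s hs
    rw [integral_indicator measurableSet_Iic, Measure.restrict_restrict measurableSet_Iic,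
      inter_comm, Ioc_inter_Iic, inf_of_le_right hs.2, intervalIntegral.integral_of_le hs.1.le]
  have upper_section : ∀ᵐ τ ∂μ, ∫ s in τ..t, f s τ = ∫ s, (Ici τ).indicator (f · τ) s ∂μ := by
    filter_upwards [ae_restrict_mem measurableSet_Ioc] with τ hτ
    rw [integral_indicator measurableSet_Ici, Measure.restrict_restrict measurableSet_Ici,
      Ici_inter_Ioc_of_lt hτ.1, intervalIntegral.integral_of_le hτ.2, integral_Icc_eq_integral_Ioc]
  rw [intervalIntegral.integral_of_le hat, intervalIntegral.integral_of_le hat,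
    integral_congr_ae lower_section, integral_congr_ae upper_section]
  exact integral_integral_swap ((integrable_indicator_iff hT).2 hf)

lemma abs_integral_mul_le_of_ae_abs_le {x y M : ℝ} (hxy : x ≤ y) {k w : ℝ → ℝ}
    (hk : IntervalIntegrable k volume x y) (hk_nonneg : ∀ τ ∈ Ioo x y, 0 ≤ k τ)
    (hw : ∀ᵐ τ ∂volume.restrict (Icc x y), |w τ| ≤ M) :
    |∫ τ in x..y, k τ * w τ| ≤ M * ∫ τ in x..y, k τ := by
  rw [← Real.norm_eq_abs, ← intervalIntegral.integral_const_mul,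
    intervalIntegral.integral_of_le hxy, intervalIntegral.integral_of_le hxy,
    integral_Ioc_eq_integral_Ioo, integral_Ioc_eq_integral_Ioo]
  refine norm_integral_le_of_norm_le ((hk.const_mul M).1.mono_set Ioo_subset_Ioc_self) ?_
  filter_upwards [ae_restrict_of_ae_restrict_of_subset Ioo_subset_Icc_self hw,
    ae_restrict_mem measurableSet_Ioo] with τ hwτ hτ
  rw [norm_mul, Real.norm_of_nonneg (hk_nonneg τ hτ), mul_comm]
  exact mul_le_mul_of_nonneg_right hwτ (hk_nonneg τ hτ)

lemma eqOn_of_integral_eq [CompleteSpace E] {a b : ℝ} (hab : a < b) {u v : ℝ → E}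
    (hu : ContinuousOn u (Icc a b)) (hv : ContinuousOn v (Icc a b))
    (h : ∀ t ∈ Icc a b, ∫ τ in a..t, u τ = ∫ τ in a..t, v τ) : EqOn u v (Icc a b) := by
  intro t ht
  have hasDeriv_primitive {w : ℝ → E} (hw : ContinuousOn w (Icc a b)) :
      HasDerivWithinAt (fun s => ∫ τ in a..s, w τ) (w t) (Icc a b) t := by
    have : Fact (t ∈ Icc a b) := ⟨ht⟩
    exact intervalIntegral.integral_hasDerivWithinAt_right
      ((hw.mono (Icc_subset_Icc_right ht.2)).intervalIntegrable_of_Icc ht.1)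
      (hw.stronglyMeasurableAtFilter_nhdsWithin measurableSet_Icc t) (hw t ht)
  exact (uniqueDiffOn_Icc hab t ht).eq_deriv _ (hasDeriv_primitive hu)
    ((hasDeriv_primitive hv).congr h (h t ht))

end IntervalIntegrals

section Superposition

variable {X E G : Type*} [MeasurableSpace X] {μ : Measure X}
  [PseudoEMetricSpace E] {K : Set E} {F : E → X → G} {q : X → E}

lemma aestronglyMeasurable_superposition [MeasurableSpace E] [OpensMeasurableSpace E]
    [TopologicalSpace G] [TopologicalSpace.PseudoMetrizableSpace G]
    (hK : TopologicalSpace.IsSeparable K) (hq : AEMeasurable q μ) (hqK : ∀ᵐ t ∂μ, q t ∈ K)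
    (hF_meas : ∀ x ∈ K, AEStronglyMeasurable (F x) μ)
    (hF_cont : ∀ᵐ t ∂μ, ContinuousOn (F · t) K) :
    AEStronglyMeasurable (fun t => F (q t) t) μ := by
  have := hK.separableSpace
  obtain rfl | ⟨x₀, hx₀⟩ := K.eq_empty_or_nonempty
  · have : μ = 0 := by simpa using hqK
    simp [this]
  let S n := SimpleFunc.approxOn (hq.mk q) hq.measurable_mk K x₀ hx₀ n
  have S_mem n t : S n t ∈ K := SimpleFunc.approxOn_mem _ hx₀ n t
  have F_S_meas n : AEStronglyMeasurable (fun t => F (S n t) t) μ := by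
    have fibers : ⋃ y : (S n).range, S n ⁻¹' {y.1} = univ := by
      ext t
      simp
    rw [← Measure.restrict_univ (μ := μ), ← fibers, aestronglyMeasurable_iUnion_iff]
    rintro ⟨y, hy⟩
    obtain ⟨t, rfl⟩ := SimpleFunc.mem_range.1 hy
    refine (hF_meas _ (S_mem n t)).restrict.congr ?_
    filter_upwards [ae_restrict_mem ((S n).measurableSet_fiber _)] with s hs
    exact congrArg (F · s) (Eq.symm hs)
  refine aestronglyMeasurable_of_tendsto_ae Filter.atTop F_S_meas ?_
  filter_upwards [hF_cont, hqK, hq.ae_eq_mk] with t hFt hqt hmk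
  have S_tendsto : Filter.Tendsto (S · t) Filter.atTop (nhdsWithin (q t) K) := by
    refine tendsto_nhdsWithin_iff.2 ⟨?_, .of_forall fun n => S_mem n t⟩
    rw [hmk]
    exact SimpleFunc.tendsto_approxOn _ _ (subset_closure (hmk ▸ hqt))
  exact (hFt (q t) hqt).tendsto.comp S_tendsto

lemma ae_forall_mem_of_forall_mem_ae [TopologicalSpace G] {C : Set G} (hC : IsClosed C)
    (hK : TopologicalSpace.IsSeparable K) (hF_cont : ∀ᵐ t ∂μ, ContinuousOn (F · t) K)
    (hF : ∀ x ∈ K, ∀ᵐ t ∂μ, F x t ∈ C) : ∀ᵐ t ∂μ, ∀ x ∈ K, F x t ∈ C := by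
  obtain ⟨D, hDK, hD_countable, hKD⟩ := hK.exists_countable_dense_subset
  filter_upwards [hF_cont, (ae_ball_iff hD_countable).2 fun x hx => hF x (hDK hx)]
    with t hFt hDt x hx
  exact hC.closure_subset (((hFt x hx).mono hDK).mem_closure (hKD hx) hDt)

lemma memLp_top_superposition [MeasurableSpace E] [OpensMeasurableSpace E]
    [NormedAddCommGroup G] {M : ℝ}
    (hK : TopologicalSpace.IsSeparable K) (hq : AEMeasurable q μ) (hqK : ∀ᵐ t ∂μ, q t ∈ K)
    (hF_meas : ∀ x ∈ K, AEStronglyMeasurable (F x) μ)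
    (hF_cont : ∀ᵐ t ∂μ, ContinuousOn (F · t) K)
    (hF_bdd : ∀ x ∈ K, ∀ᵐ t ∂μ, ‖F x t‖ ≤ M) :
    MemLp (fun t => F (q t) t) ⊤ μ := by
  refine memLp_top_of_bound (aestronglyMeasurable_superposition hK hq hqK hF_meas hF_cont) M ?_
  have F_bdd := ae_forall_mem_of_forall_mem_ae (C := {y | ‖y‖ ≤ M})
    (isClosed_le continuous_norm continuous_const) hK hF_cont hF_bdd
  filter_upwards [F_bdd, hqK] with t hFt hqt using hFt (q t) hqt

end Superposition

section FractionalIntegral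

variable {a b t x y α β M : ℝ} {u v w : ℝ → ℝ}

lemma rlInt_zero (a : ℝ) (w : ℝ → ℝ) : rlInt a 0 w = w := by
  ext t
  simp [rlInt]

lemma rlInt_of_pos (hα : 0 < α) (a : ℝ) (w : ℝ → ℝ) (t : ℝ) :
    rlInt a α w t = (1 / Real.Gamma α) * ∫ τ in a..t, (t - τ) ^ (α - 1) * w τ :=
  if_neg hα.ne'

lemma rlInt_one (a : ℝ) (w : ℝ → ℝ) (t : ℝ) : rlInt a 1 w t = ∫ τ in a..t, w τ := by
  simp [rlInt]

lemma rlInt_self_of_eq_zero (hw : w a = 0) : rlInt a α w a = 0 := by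
  simp [rlInt, hw]

lemma rlInt_congr (hat : a ≤ t) (h : EqOn u v (Icc a t)) : rlInt a α u t = rlInt a α v t := by
  have : ∫ τ in a..t, (t - τ) ^ (α - 1) * u τ = ∫ τ in a..t, (t - τ) ^ (α - 1) * v τ :=
    intervalIntegral.integral_congr fun τ hτ => by simp only [h (uIcc_of_le hat ▸ hτ)]
  simp only [rlInt, this, h (right_mem_Icc.2 hat)]

lemma aestronglyMeasurable_rpow_kernel {μ ν : Measure ℝ} [SFinite ν]
    (hw : AEStronglyMeasurable w ν) : AEStronglyMeasurable (Function.uncurry fun s τ =>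
      (t - s) ^ (β - 1) * ((s - τ) ^ (α - 1) * w τ)) (μ.prod ν) := by
  have outer : Measurable fun p : ℝ × ℝ => (t - p.1) ^ (β - 1) := by fun_prop
  have inner : Measurable fun p : ℝ × ℝ => (p.1 - p.2) ^ (α - 1) := by fun_prop
  exact outer.aestronglyMeasurable.mul (inner.aestronglyMeasurable.mul hw.comp_snd)

lemma integrableOn_triangle_rpow_kernel (hα : 0 < α) (hβ : 0 < β)
    (hw_meas : AEStronglyMeasurable w (volume.restrict (Ioc a t)))
    (hw : IntegrableOn (fun τ => (t - τ) ^ (α + β - 1) * w τ) (Ioc a t)) :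
    IntegrableOn (Function.uncurry fun s τ => (t - s) ^ (β - 1) * ((s - τ) ^ (α - 1) * w τ))
      {p | p.2 ≤ p.1} ((volume.restrict (Ioc a t)).prod (volume.restrict (Ioc a t))) := by
  set μ := volume.restrict (Ioc a t) with hμ
  have hT : MeasurableSet {p : ℝ × ℝ | p.2 ≤ p.1} := measurableSet_le measurable_snd measurable_fst
  let k τ s := (t - s) ^ (β - 1) * (s - τ) ^ (α - 1)
  have section_eq τ s : {p : ℝ × ℝ | p.2 ≤ p.1}.indicator (Function.uncurry fun s τ =>
      (t - s) ^ (β - 1) * ((s - τ) ^ (α - 1) * w τ)) (s, τ) = (Ici τ).indicator (k τ) s * w τ := by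
    simp only [indicator, mem_ofPred_eq, mem_Ici, Function.uncurry_apply_pair, k]
    split_ifs <;> ring
  have norm_section τ : ∀ᵐ s ∂μ, ‖(Ici τ).indicator (k τ) s * w τ‖ =
      (Ici τ).indicator (k τ) s * ‖w τ‖ := by
    filter_upwards [ae_restrict_mem measurableSet_Ioc] with s hs
    rw [norm_mul, Real.norm_of_nonneg]
    exact indicator_apply_nonneg fun hτs => mul_nonneg
      (Real.rpow_nonneg (sub_nonneg.2 hs.2) _) (Real.rpow_nonneg (sub_nonneg.2 hτs) _)
  have ae_mem_Ioo : ∀ᵐ τ ∂μ, τ ∈ Ioo a t := by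
    rw [hμ, ← restrict_Ioo_eq_restrict_Ioc]
    exact ae_restrict_mem measurableSet_Ioo
  have restrict_Ici {τ : ℝ} (hτ : a < τ) : μ.restrict (Ici τ) = volume.restrict (Icc τ t) := by
    rw [hμ, Measure.restrict_restrict measurableSet_Ici, Ici_inter_Ioc_of_lt hτ]
  rw [← integrable_indicator_iff hT, integrable_prod_iff'
    ((aestronglyMeasurable_rpow_kernel hw_meas).indicator hT)]
  simp only [section_eq]
  constructor
  · filter_upwards [ae_mem_Ioo] with τ hτ
    refine Integrable.mul_const ?_ _
    rw [integrable_indicator_iff measurableSet_Ici, IntegrableOn, restrict_Ici hτ.1]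
    exact integrableOn_sub_rpow_mul_sub_rpow hα hβ hτ.2
  · refine (hw.norm.const_mul (ProbabilityTheory.beta α β)).congr ?_
    filter_upwards [ae_mem_Ioo] with τ hτ
    rw [integral_congr_ae (norm_section τ), integral_mul_const,
      integral_indicator measurableSet_Ici, restrict_Ici hτ.1, integral_Icc_eq_integral_Ioc,
      ← intervalIntegral.integral_of_le hτ.2.le, integral_sub_rpow_mul_sub_rpow hα hβ hτ.2,
      norm_mul, Real.norm_of_nonneg (Real.rpow_nonneg (sub_pos.2 hτ.2).le _)]
    ring

theorem rlInt_rlInt (hα : 0 ≤ α) (hβ : 0 ≤ β) (hat : a ≤ t)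
    (hw_meas : AEStronglyMeasurable w (volume.restrict (Ioc a t)))
    (hw : IntegrableOn (fun τ => (t - τ) ^ (α + β - 1) * w τ) (Ioc a t)) :
    rlInt a β (rlInt a α w) t = rlInt a (α + β) w t := by
  obtain rfl | hα := hα.eq_or_lt
  · rw [rlInt_zero, zero_add]
  obtain rfl | hβ := hβ.eq_or_lt
  · rw [rlInt_zero, add_zero]
  have inner_integral : ∀ᵐ τ, τ ∈ uIoc a t →
      ∫ s in τ..t, (t - s) ^ (β - 1) * ((s - τ) ^ (α - 1) * w τ) =
        ProbabilityTheory.beta α β * ((t - τ) ^ (α + β - 1) * w τ) := by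
    filter_upwards [Measure.ae_ne volume t] with τ hτ_ne hτ
    rw [uIoc_of_le hat] at hτ
    simp only [← mul_assoc, intervalIntegral.integral_mul_const]
    rw [integral_sub_rpow_mul_sub_rpow hα hβ (hτ.2.lt_of_ne hτ_ne), mul_comm (_ ^ _)]
  have := (Real.Gamma_pos_of_pos hα).ne'
  have := (Real.Gamma_pos_of_pos hβ).ne'
  calc rlInt a β (rlInt a α w) t
    _ = 1 / Real.Gamma β * (1 / Real.Gamma α *
        ∫ s in a..t, ∫ τ in a..s, (t - s) ^ (β - 1) * ((s - τ) ^ (α - 1) * w τ)) := by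
      simp only [rlInt_of_pos hα, rlInt_of_pos hβ, intervalIntegral.integral_const_mul,
        mul_left_comm _ (1 / Real.Gamma α)]
    _ = 1 / Real.Gamma β * (1 / Real.Gamma α *
        ∫ τ in a..t, ∫ s in τ..t, (t - s) ^ (β - 1) * ((s - τ) ^ (α - 1) * w τ)) := by
      rw [intervalIntegral_integral_triangle_swap hat
        (integrableOn_triangle_rpow_kernel hα hβ hw_meas hw)]
    _ = rlInt a (α + β) w t := by
      rw [intervalIntegral.integral_congr_ae inner_integral, intervalIntegral.integral_const_mul,
        rlInt_of_pos (add_pos hα hβ), ProbabilityTheory.beta]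
      field_simp

lemma rlInt_one_sub_rlInt (hα : 0 ≤ α) (hα1 : α ≤ 1) (hat : a ≤ t)
    (hw : IntegrableOn w (Icc a t)) :
    rlInt a (1 - α) (rlInt a α w) t = ∫ τ in a..t, w τ := by
  have hw' : IntegrableOn w (Ioc a t) := hw.mono_set Ioc_subset_Icc_self
  rw [rlInt_rlInt hα (sub_nonneg.2 hα1) hat hw'.aestronglyMeasurable (by simpa using hw'),
    add_sub_cancel, rlInt_one]

lemma intervalIntegrable_sub_rpow_mul (hα : 0 < α) (hxy : x ≤ y) (s : ℝ)
    (hw_meas : AEStronglyMeasurable w (volume.restrict (Icc x y)))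
    (hw : ∀ᵐ τ ∂volume.restrict (Icc x y), |w τ| ≤ M) :
    IntervalIntegrable (fun τ => (s - τ) ^ (α - 1) * w τ) volume x y := by
  have kernel := intervalIntegrable_sub_rpow hα s x y
  rw [intervalIntegrable_iff_integrableOn_Icc_of_le hxy] at kernel ⊢
  exact kernel.mul_bdd hw_meas hw

lemma abs_integral_sub_rpow_mul_le (hα : 0 < α) (hxy : x ≤ y)
    (hw : ∀ᵐ τ ∂volume.restrict (Icc x y), |w τ| ≤ M) :
    |∫ τ in x..y, (y - τ) ^ (α - 1) * w τ| ≤ M * ((y - x) ^ α / α) := by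
  have := abs_integral_mul_le_of_ae_abs_le hxy (intervalIntegrable_sub_rpow hα y x y)
    (fun τ hτ => Real.rpow_nonneg (sub_nonneg.2 hτ.2.le) _) hw
  simpa [integral_sub_rpow hα, Real.zero_rpow hα.ne'] using this

lemma abs_integral_sub_rpow_sub_sub_rpow_mul_le (hα : 0 < α) (hα1 : α ≤ 1) (hax : a ≤ x)
    (hxy : x ≤ y) (hM : 0 ≤ M) (hw : ∀ᵐ τ ∂volume.restrict (Icc a x), |w τ| ≤ M) :
    |∫ τ in a..x, ((x - τ) ^ (α - 1) - (y - τ) ^ (α - 1)) * w τ| ≤ M * ((y - x) ^ α / α) := by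
  have kernel_nonneg : ∀ τ ∈ Ioo a x, 0 ≤ (x - τ) ^ (α - 1) - (y - τ) ^ (α - 1) :=
    fun τ hτ => sub_nonneg.2 <| Real.rpow_le_rpow_of_nonpos (sub_pos.2 hτ.2)
      (sub_le_sub_right hxy τ) (sub_nonpos.2 hα1)
  have int_x := intervalIntegrable_sub_rpow hα x a x
  have int_y := intervalIntegrable_sub_rpow hα y a x
  have : (x - a) ^ α ≤ (y - a) ^ α :=
    Real.rpow_le_rpow (sub_nonneg.2 hax) (sub_le_sub_right hxy a) hα.le
  calc |∫ τ in a..x, ((x - τ) ^ (α - 1) - (y - τ) ^ (α - 1)) * w τ|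
    _ ≤ M * ∫ τ in a..x, ((x - τ) ^ (α - 1) - (y - τ) ^ (α - 1)) :=
      abs_integral_mul_le_of_ae_abs_le hax (int_x.sub int_y) kernel_nonneg hw
    _ = M * (((x - a) ^ α - ((y - a) ^ α - (y - x) ^ α)) / α) := by
      rw [intervalIntegral.integral_sub int_x int_y, integral_sub_rpow hα, integral_sub_rpow hα,
        sub_self, Real.zero_rpow hα.ne', sub_zero, ← sub_div]
    _ ≤ M * ((y - x) ^ α / α) := by
      gcongr
      linarith

lemma abs_rlInt_sub_rlInt_le (hα : 0 < α) (hα1 : α ≤ 1) (hax : a ≤ x) (hxy : x ≤ y) (hM : 0 ≤ M)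
    (hw_meas : AEStronglyMeasurable w (volume.restrict (Icc a y)))
    (hw : ∀ᵐ τ ∂volume.restrict (Icc a y), |w τ| ≤ M) :
    |rlInt a α w y - rlInt a α w x| ≤ 2 * M / Real.Gamma (α + 1) * (y - x) ^ α := by
  have hw_left := ae_restrict_of_ae_restrict_of_subset (Icc_subset_Icc_right hxy) hw
  have hw_right := ae_restrict_of_ae_restrict_of_subset (Icc_subset_Icc_left hax) hw
  have int_left s := intervalIntegrable_sub_rpow_mul hα hax s
    (hw_meas.mono_set (Icc_subset_Icc_right hxy)) hw_left
  have int_right := intervalIntegrable_sub_rpow_mul hα hxy y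
    (hw_meas.mono_set (Icc_subset_Icc_left hax)) hw_right
  have split : (∫ τ in a..y, (y - τ) ^ (α - 1) * w τ) - ∫ τ in a..x, (x - τ) ^ (α - 1) * w τ =
      (∫ τ in x..y, (y - τ) ^ (α - 1) * w τ) -
        ∫ τ in a..x, ((x - τ) ^ (α - 1) - (y - τ) ^ (α - 1)) * w τ := by
    simp only [sub_mul]
    rw [intervalIntegral.integral_sub (int_left x) (int_left y),
      ← intervalIntegral.integral_add_adjacent_intervals (int_left y) int_right]
    ring
  have hΓ := Real.Gamma_pos_of_pos hα
  calc |rlInt a α w y - rlInt a α w x|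
    _ = 1 / Real.Gamma α * |(∫ τ in x..y, (y - τ) ^ (α - 1) * w τ) -
        ∫ τ in a..x, ((x - τ) ^ (α - 1) - (y - τ) ^ (α - 1)) * w τ| := by
      rw [rlInt_of_pos hα, rlInt_of_pos hα, ← mul_sub, split, abs_mul,
        abs_of_pos (one_div_pos.2 hΓ)]
    _ ≤ 1 / Real.Gamma α * (M * ((y - x) ^ α / α) + M * ((y - x) ^ α / α)) := by
      gcongr
      exact (abs_sub _ _).trans (add_le_add (abs_integral_sub_rpow_mul_le hα hxy hw_right)
        (abs_integral_sub_rpow_sub_sub_rpow_mul_le hα hα1 hax hxy hM hw_left))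
    _ = 2 * M / Real.Gamma (α + 1) * (y - x) ^ α := by
      rw [Real.Gamma_add_one hα.ne']
      field_simp
      ring

theorem holderOnWith_rlInt (hα : 0 < α) (hα1 : α ≤ 1) (hM : 0 ≤ M)
    (hw_meas : AEStronglyMeasurable w (volume.restrict (Icc a b)))
    (hw : ∀ᵐ τ ∂volume.restrict (Icc a b), |w τ| ≤ M) :
    HolderOnWith (2 * M / Real.Gamma (α + 1)).toNNReal α.toNNReal (rlInt a α w) (Icc a b) := by
  intro x hx y hy
  wlog hxy : x ≤ y generalizing x y
  · simpa only [edist_comm] using this y hy x hx (le_of_not_ge hxy)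
  have hsub : Icc a y ⊆ Icc a b := Icc_subset_Icc_right hy.2
  rw [edist_comm, edist_comm x, edist_dist, edist_dist, Real.dist_eq, Real.dist_eq,
    abs_of_nonneg (sub_nonneg.2 hxy), Real.coe_toNNReal _ hα.le,
    ENNReal.ofReal_rpow_of_nonneg (sub_nonneg.2 hxy) hα.le, ← ENNReal.ofReal,
    ← ENNReal.ofReal_mul (by positivity)]
  exact ENNReal.ofReal_le_ofReal <| abs_rlInt_sub_rlInt_le hα hα1 hx.1 hxy hM
    (hw_meas.mono_set hsub) (ae_restrict_of_ae_restrict_of_subset hsub hw)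

lemma continuousOn_rlInt (hα : 0 < α) (hα1 : α ≤ 1)
    (hw : MemLp w ⊤ (volume.restrict (Icc a b))) : ContinuousOn (rlInt a α w) (Icc a b) :=
  (holderOnWith_rlInt hα hα1 lpNorm_nonneg hw.1 (ae_le_lpNorm_exponent_top hw)).continuousOn
    (Real.toNNReal_pos.2 hα)

lemma continuousOn_rlInt_of_continuousOn (hα : 0 ≤ α) (hα1 : α ≤ 1)
    (hw : ContinuousOn w (Icc a b)) : ContinuousOn (rlInt a α w) (Icc a b) := by
  obtain rfl | hα := hα.eq_or_lt
  · rwa [rlInt_zero]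
  obtain ⟨M, hM⟩ := isCompact_Icc.exists_bound_of_continuousOn hw
  exact continuousOn_rlInt hα hα1 <| memLp_top_of_bound
    (hw.aestronglyMeasurable measurableSet_Icc) M <| ae_restrict_of_forall_mem measurableSet_Icc hM

theorem eqOn_of_eqOn_rlInt (hα : 0 ≤ α) (hα1 : α ≤ 1) (hab : a < b)
    (hu : ContinuousOn u (Icc a b)) (hv : ContinuousOn v (Icc a b))
    (h : EqOn (rlInt a α u) (rlInt a α v) (Icc a b)) : EqOn u v (Icc a b) := by
  refine eqOn_of_integral_eq hab hu hv fun t ht => ?_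
  have hsub : Icc a t ⊆ Icc a b := Icc_subset_Icc_right ht.2
  rw [← rlInt_one_sub_rlInt hα hα1 ht.1 (hu.mono hsub).integrableOn_Icc,
    ← rlInt_one_sub_rlInt hα hα1 ht.1 (hv.mono hsub).integrableOn_Icc]
  exact rlInt_congr ht.1 (h.mono hsub)

end FractionalIntegral

section FractionalDerivative

variable {a α : ℝ} {u g h : ℝ → ℝ} {I : Set ℝ}

lemma IsIntervalFrom.Icc_subset (hI : IsIntervalFrom a I) {t : ℝ} (ht : t ∈ I) : Icc a t ⊆ I :=
  hI.2.2.2.out hI.1 ht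

lemma IsIntervalFrom.exists_gt_mem (hI : IsIntervalFrom a I) : ∃ b ∈ I, a < b := by
  obtain ⟨b, hb⟩ := hI.2.2.1
  have : interior I ⊆ Ioi a := interior_Ici (a := a) ▸ interior_mono hI.2.1
  exact ⟨b, interior_subset hb, this hb⟩

/-- `h` is the left Riemann–Liouville derivative of order `α` of `u` on `I`: the function
`I^{1-α}_{a+}[u]` is almost everywhere equal to a locally absolutely continuous function whose
derivative is `h`, the latter being encoded as a constant plus a primitive of `h`. -/
def HasRLDerivOn (a α : ℝ) (u h : ℝ → ℝ) (I : Set ℝ) : Prop :=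
  (∀ b ∈ I, IntegrableOn h (Icc a b)) ∧
    ∃ c, ∀ᵐ t ∂volume.restrict I, rlInt a (1 - α) u t = c + ∫ τ in a..t, h τ

lemma HasRLDerivOn.congr_ae (hI : IsIntervalFrom a I) (hu : HasRLDerivOn a α u h I)
    (hhg : h =ᵐ[volume.restrict I] g) : HasRLDerivOn a α u g I := by
  have hhg_Icc {t : ℝ} (ht : t ∈ I) : h =ᵐ[volume.restrict (Icc a t)] g :=
    ae_restrict_of_ae_restrict_of_subset (hI.Icc_subset ht) hhg
  obtain ⟨h_int, c, hc⟩ := hu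
  refine ⟨fun b hb => (h_int b hb).congr (hhg_Icc hb), c, ?_⟩
  filter_upwards [hc, ae_restrict_mem hI.2.2.2.measurableSet] with t ht htI
  rw [ht, intervalIntegral.integral_congr_ae_restrict]
  rw [uIoc_of_le (hI.2.1 htI)]
  exact ae_restrict_of_ae_restrict_of_subset Ioc_subset_Icc_self (hhg_Icc htI)

theorem hasRLDerivOn_of_eqOn_rlInt (hI : IsIntervalFrom a I) (hα : 0 ≤ α) (hα1 : α ≤ 1)
    (hg : ∀ b ∈ I, IntegrableOn g (Icc a b)) (hu : EqOn u (rlInt a α g) I) :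
    HasRLDerivOn a α u g I := by
  refine ⟨hg, 0, ae_restrict_of_forall_mem hI.2.2.2.measurableSet fun t ht => ?_⟩
  rw [rlInt_congr (hI.2.1 ht) (hu.mono (hI.Icc_subset ht)),
    rlInt_one_sub_rlInt hα hα1 (hI.2.1 ht) (hg t ht), zero_add]

lemma HasRLDerivOn.rlInt_one_sub_eq_integral (hI : IsIntervalFrom a I) (hα : 0 ≤ α)
    (hα1 : α ≤ 1) (hu : ContinuousOn u I) (hua : u a = 0) (hd : HasRLDerivOn a α u g I) {t : ℝ}
    (ht : t ∈ I) : rlInt a (1 - α) u t = ∫ τ in a..t, g τ := by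
  obtain ⟨hg, c, hc⟩ := hd
  have eqOn_Icc {b : ℝ} (hb : b ∈ I) (hab : a < b) :
      EqOn (rlInt a (1 - α) u) (fun t => c + ∫ τ in a..t, g τ) (Icc a b) := by
    refine Measure.eqOn_Icc_of_ae_eq volume hab.ne
      (ae_restrict_of_ae_restrict_of_subset (hI.Icc_subset hb) hc) ?_ ?_
    · exact continuousOn_rlInt_of_continuousOn (sub_nonneg.2 hα1) (by linarith)
        (hu.mono (hI.Icc_subset hb))
    · refine continuousOn_const.add ?_
      rw [← uIcc_of_le hab.le]
      exact intervalIntegral.continuousOn_primitive_interval (uIcc_of_le hab.le ▸ hg b hb)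
  obtain ⟨b, hb, hab⟩ := hI.exists_gt_mem
  have hc0 : c = 0 := by
    simpa [rlInt_self_of_eq_zero hua] using (eqOn_Icc hb hab (left_mem_Icc.2 hab.le)).symm
  obtain rfl | hat := (mem_Ici.1 (hI.2.1 ht)).eq_or_lt
  · simp [rlInt_self_of_eq_zero hua]
  · simpa [hc0] using eqOn_Icc ht hat (right_mem_Icc.2 hat.le)

theorem HasRLDerivOn.eqOn_rlInt (hI : IsIntervalFrom a I) (hα : 0 < α) (hα1 : α ≤ 1)
    (hu : ContinuousOn u I) (hua : u a = 0)
    (hg : ∀ b ∈ I, MemLp g ⊤ (volume.restrict (Icc a b))) (hd : HasRLDerivOn a α u g I) :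
    EqOn u (rlInt a α g) I := by
  intro t ht
  obtain rfl | hat := (mem_Ici.1 (hI.2.1 ht)).eq_or_lt
  · simp [hua, rlInt_of_pos hα]
  refine eqOn_of_eqOn_rlInt (sub_nonneg.2 hα1) (by linarith) hat (hu.mono (hI.Icc_subset ht))
    (continuousOn_rlInt hα hα1 (hg t ht)) (fun s hs => ?_) (right_mem_Icc.2 hat.le)
  have hsI := hI.Icc_subset ht hs
  rw [hd.rlInt_one_sub_eq_integral hI hα.le hα1 hu hua hsI,
    rlInt_one_sub_rlInt hα.le hα1 hs.1 (hd.1 s hsI)]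

theorem hasRLDerivOn_iff_eqOn_rlInt (hI : IsIntervalFrom a I) (hα : 0 < α) (hα1 : α ≤ 1)
    (hu : ContinuousOn u I) (hua : u a = 0)
    (hg : ∀ b ∈ I, MemLp g ⊤ (volume.restrict (Icc a b))) :
    HasRLDerivOn a α u g I ↔ EqOn u (rlInt a α g) I :=
  ⟨fun hd => hd.eqOn_rlInt hI hα hα1 hu hua hg,
    hasRLDerivOn_of_eqOn_rlInt hI hα.le hα1 fun b hb => (hg b hb).integrable le_top⟩

end FractionalDerivative

section CaputoCauchyProblem

variable {a : ℝ} {If I : Set ℝ} {m : ℕ} {Ω : Set (EuclideanSpace ℝ (Fin m))} {α : Fin m → ℝ}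
  {qa : EuclideanSpace ℝ (Fin m)} {F : EuclideanSpace ℝ (Fin m) → ℝ → EuclideanSpace ℝ (Fin m)}
  {q : ℝ → EuclideanSpace ℝ (Fin m)}

lemma isCaputoLocalSol_iff_hasRLDerivOn : IsCaputoLocalSol a If Ω α qa F q I ↔
    IsIntervalFrom a I ∧ I ⊆ If ∧ ContinuousOn q I ∧ (∀ t ∈ I, q t ∈ Ω) ∧ q a = qa ∧
      ∀ i, HasRLDerivOn a (α i) (fun τ => q τ i - qa i) (fun t => F (q t) t i) I := by
  refine and_congr_right fun hI => and_congr_right fun _ => and_congr_right fun _ =>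
    and_congr_right fun _ => and_congr_right fun _ => forall_congr' fun i => ⟨?_, ?_⟩
  · rintro ⟨c, h, h_int, hc, h_eq⟩
    exact HasRLDerivOn.congr_ae hI ⟨h_int, c, hc⟩ h_eq
  · rintro ⟨h_int, c, hc⟩
    exact ⟨c, _, h_int, hc, ae_eq_rfl⟩

lemma memLp_top_superposition_Icc {b : ℝ} (hsub : Icc a b ⊆ If) (hab : a ≤ b)
    (hFmeas : ∀ x ∈ Ω, AEStronglyMeasurable (F x) (volume.restrict If))
    (hFcont : ∀ᵐ t ∂volume.restrict If, ContinuousOn (F · t) Ω)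
    (hbdd : ∀ K ⊆ Ω, IsCompact K → ∀ c ∈ If, ∀ d ∈ If, c ≤ d →
      ∃ M, ∀ x ∈ K, ∀ᵐ t ∂volume.restrict (Icc c d), ‖F x t‖ ≤ M)
    (hq : ContinuousOn q (Icc a b)) (hqΩ : ∀ t ∈ Icc a b, q t ∈ Ω) :
    MemLp (fun t => F (q t) t) ⊤ (volume.restrict (Icc a b)) := by
  have hK : IsCompact (q '' Icc a b) := isCompact_Icc.image_of_continuousOn hq
  have hKΩ : q '' Icc a b ⊆ Ω := image_subset_iff.2 hqΩ
  obtain ⟨M, hM⟩ :=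
    hbdd _ hKΩ hK a (hsub (left_mem_Icc.2 hab)) b (hsub (right_mem_Icc.2 hab)) hab
  refine memLp_top_superposition hK.isSeparable (hq.aemeasurable measurableSet_Icc)
    (ae_restrict_of_forall_mem measurableSet_Icc fun t => mem_image_of_mem q)
    (fun x hx => (hFmeas x (hKΩ hx)).mono_set hsub) ?_ hM
  filter_upwards [ae_restrict_of_ae_restrict_of_subset hsub hFcont] with t ht using ht.mono hKΩ

end CaputoCauchyProblem

theorem statement6_general (a : ℝ) (If : Set ℝ) (m : ℕ) (Ω : Set (EuclideanSpace ℝ (Fin m)))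
    (α : Fin m → ℝ) (hα : ∀ i, 0 < α i ∧ α i ≤ 1) (qa : EuclideanSpace ℝ (Fin m))
    (F : EuclideanSpace ℝ (Fin m) → ℝ → EuclideanSpace ℝ (Fin m))
    (hFmeas : ∀ x ∈ Ω, AEStronglyMeasurable (F x) (volume.restrict If))
    (hFcont : ∀ᵐ t ∂volume.restrict If, ContinuousOn (F · t) Ω)
    (hbdd : ∀ K ⊆ Ω, IsCompact K → ∀ c ∈ If, ∀ d ∈ If, c ≤ d →
      ∃ M, ∀ x ∈ K, ∀ᵐ t ∂volume.restrict (Icc c d), ‖F x t‖ ≤ M)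
    (q : ℝ → EuclideanSpace ℝ (Fin m)) (I : Set ℝ) :
    IsCaputoLocalSol a If Ω α qa F q I ↔
      IsIntervalFrom a I ∧ I ⊆ If ∧ ContinuousOn q I ∧ (∀ t ∈ I, q t ∈ Ω) ∧
        ∀ t ∈ I, ∀ i, q t i = qa i
          + (1 / Real.Gamma (α i)) * ∫ τ in a..t, (t - τ) ^ (α i - 1) * F (q τ) τ i := by
  rw [isCaputoLocalSol_iff_hasRLDerivOn]
  refine and_congr_right fun hI => and_congr_right fun hIf => and_congr_right fun hq =>
    and_congr_right fun hqΩ => ?_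
  have hg i b (hb : b ∈ I) : MemLp (fun t => F (q t) t i) ⊤ (volume.restrict (Icc a b)) :=
    have hbI := hI.Icc_subset hb
    (EuclideanSpace.proj (𝕜 := ℝ) i).comp_memLp' <| memLp_top_superposition_Icc (hbI.trans hIf)
      (hI.2.1 hb) hFmeas hFcont hbdd (hq.mono hbI) fun t ht => hqΩ t (hbI ht)
  have hu i : ContinuousOn (fun τ => q τ i - qa i) I :=
    ((EuclideanSpace.proj (𝕜 := ℝ) i).continuous.comp_continuousOn hq).sub continuousOn_const
  have integral_eq_iff t i : (q t i = qa i + (1 / Real.Gamma (α i)) *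
      ∫ τ in a..t, (t - τ) ^ (α i - 1) * F (q τ) τ i) ↔
      q t i - qa i = rlInt a (α i) (fun τ => F (q τ) τ i) t := by
    rw [rlInt_of_pos (hα i).1, sub_eq_iff_eq_add']
  have scalar_iff (hqa : q a = qa) i := hasRLDerivOn_iff_eqOn_rlInt hI (hα i).1 (hα i).2 (hu i)
    (by simp [hqa]) (hg i)
  simp only [integral_eq_iff]
  constructor
  · rintro ⟨hqa, hd⟩ t ht i
    exact (scalar_iff hqa i).1 (hd i) ht
  · intro h
    have hqa : q a = qa := by
      ext i
      simpa [rlInt_of_pos (hα i).1, sub_eq_zero] using h a hI.1 i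
    exact ⟨hqa, fun i => (scalar_iff hqa i).2 fun t ht => h t ht i⟩

theorem statement6 (a : ℝ) (If : Set ℝ)
    (haI : a ∈ If) (hIsub : If ⊆ Set.Ici a) (hIint : (interior If).Nonempty)
    (hIord : If.OrdConnected)
    (m : ℕ) (hm : 0 < m) (Ω : Set (EuclideanSpace ℝ (Fin m)))
    (hΩopen : IsOpen Ω) (hΩne : Ω.Nonempty)
    (α : Fin m → ℝ) (hα : ∀ i, 0 < α i ∧ α i ≤ 1)
    (qa : EuclideanSpace ℝ (Fin m)) (hqa : qa ∈ Ω)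
    (F : EuclideanSpace ℝ (Fin m) → ℝ → EuclideanSpace ℝ (Fin m))
    -- Carathéodory assumptions
    (hFmeas : ∀ x ∈ Ω, MeasureTheory.AEStronglyMeasurable (fun t => F x t)
      (MeasureTheory.volume.restrict If))
    (hFcont : ∀ᵐ t ∂(MeasureTheory.volume.restrict If), ContinuousOn (fun x => F x t) Ω)
    -- `F` is bounded on compacts
    (hbdd : ∀ K : Set (EuclideanSpace ℝ (Fin m)), K ⊆ Ω → IsCompact K →
      ∀ c ∈ If, ∀ d ∈ If, c ≤ d → ∃ M : ℝ, 0 ≤ M ∧ ∀ x ∈ K,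
        ∀ᵐ t ∂(MeasureTheory.volume.restrict (Set.Icc c d)), ‖F x t‖ ≤ M)
    (q : ℝ → EuclideanSpace ℝ (Fin m)) (I : Set ℝ) :
    IsCaputoLocalSol a If Ω α qa F q I ↔
      (IsIntervalFrom a I ∧ I ⊆ If ∧ ContinuousOn q I ∧ (∀ t ∈ I, q t ∈ Ω) ∧
        ∀ t ∈ I, ∀ i, q t i = qa i
          + (1 / Real.Gamma (α i)) * ∫ τ in a..t, (t - τ) ^ (α i - 1) * F (q τ) τ i) := by
  exact statement6_general a If m Ω α hα qa F hFmeas hFcont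
    (fun K hK hKc c hc d hd hcd => (hbdd K hK hKc c hc d hd hcd).imp fun _ hM => hM.2) q I
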